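/- arXiv:2405.03428 — 6 statements merged into one kernel-verified Lean document; each statement's English description precedes it below -/
import Mathlib

section
/- Assume the Continuum Hypothesis, i.e. 2^ℵ₀ = ℵ₁. Then the fast club poset has the ℵ₂-chain condition: every antichain (set of pairwise incompatible conditions, where two conditions are compatible iff some condition extends both) in the fast club poset has cardinality at most ℵ₁. -/
/-- The first uncountable ordinal. -/
noncomputable def omega1 : Ordinal.{0} := (Cardinal.aleph 1).ord

/-- `S` is closed in `lam`: it contains all of its limit points below `lam`. -/
def IsClosedIn (S : Set Ordinal.{0}) (lam : Ordinal.{0}) : Prop :=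
  ∀ α, α < lam → 0 < α → (∀ β < α, ∃ γ ∈ S, β < γ ∧ γ < α) → α ∈ S

/-- `S` is a club in `lam`: a closed unbounded subset of `lam`. -/
def IsClubIn (S : Set Ordinal.{0}) (lam : Ordinal.{0}) : Prop :=
  S ⊆ Set.Iio lam ∧ IsClosedIn S lam ∧ ∀ β < lam, ∃ γ ∈ S, β < γ

/-- A condition of the fast club poset: a pair `(c, E)` where `c` is a countable
closed subset of `ω₁` and `E` is a club in `ω₁`. -/
structure FastClubCond : Type 1 where
  c : Set Ordinal.{0}
  E : Set Ordinal.{0}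
  c_sub : c ⊆ Set.Iio omega1
  c_countable : c.Countable
  c_closed : IsClosedIn c omega1
  E_club : IsClubIn E omega1

/-- `q` extends `p` in the fast club poset: `p.c` is an initial segment of `q.c`,
`q.E ⊆ p.E`, and every element of `q.c \ p.c` belongs to `p.E`. -/
def FCExtends (q p : FastClubCond) : Prop :=
  p.c ⊆ q.c ∧ (∀ x ∈ q.c, x ∉ p.c → ∀ y ∈ p.c, y < x) ∧
  q.E ⊆ p.E ∧ ∀ x ∈ q.c, x ∉ p.c → x ∈ p.E



theorem club_inter {S T : Set Ordinal.{0}} (hS : IsClubIn S omega1) (hT : IsClubIn T omega1) :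
    IsClubIn (S ∩ T) omega1 := by
  obtain ⟨hS1, hS2, hS3⟩ := hS
  obtain ⟨hT1, hT2, hT3⟩ := hT
  refine ⟨fun x hx => hS1 hx.1, ?_, ?_⟩
  · intro α h1 h2 h3
    refine ⟨hS2 α h1 h2 fun β hβ => ?_, hT2 α h1 h2 fun β hβ => ?_⟩
    · obtain ⟨γ, h, h'⟩ := h3 β hβ
      exact ⟨γ, h.1, h'⟩
    · obtain ⟨γ, h, h'⟩ := h3 β hβ
      exact ⟨γ, h.2, h'⟩
  · intro β hβ
    choose! f hf1 hf2 using hS3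
    choose! g hg1 hg2 using hT3
    let x : ℕ → Ordinal.{0} := fun n => Nat.rec β (fun _ y => g (f y)) n
    have hx : ∀ n, x n < omega1 := by
      intro n
      induction n with
      | zero => exact hβ
      | succ n ih => exact hT1 (hg1 _ (hS1 (hf1 _ ih)))
    have hfx : ∀ n, x n < f (x n) := fun n => hf2 _ (hx n)
    have hxs : ∀ n, f (x n) < x (n + 1) := fun n => hg2 _ (hS1 (hf1 _ (hx n)))
    have hb : BddAbove (Set.range x) := ⟨omega1, by rintro _ ⟨n, rfl⟩; exact (hx n).le⟩
    have hlt : ∀ n, x n < ⨆ n, x n := fun n =>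
      ((hfx n).trans (hxs n)).trans_le (le_ciSup hb (n + 1))
    have hs : (⨆ n, x n) < omega1 := by
      have := Ordinal.iSup_lt_omega_one (f := x) (fun n => by
        have := hx n
        rwa [omega1, Cardinal.ord_aleph] at this)
      rwa [omega1, Cardinal.ord_aleph]
    have hpos : 0 < ⨆ n, x n := (zero_le (a := x 0)).trans_lt (hlt 0)
    refine ⟨⨆ n, x n, ⟨hS2 _ hs hpos ?_, hT2 _ hs hpos ?_⟩, hlt 0⟩
    · intro b h
      obtain ⟨n, hn⟩ := exists_lt_of_lt_ciSup h
      exact ⟨f (x n), hf1 _ (hx n), hn.trans (hfx n), (hxs n).trans (hlt (n + 1))⟩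
    · intro b h
      obtain ⟨n, hn⟩ := exists_lt_of_lt_ciSup h
      exact ⟨x (n + 1), hg1 _ (hS1 (hf1 _ (hx n))), hn.trans ((hfx n).trans (hxs n)), hlt (n + 1)⟩

/-- Assuming CH, the fast club poset has the ℵ₂-chain condition: every set of
pairwise incompatible conditions has cardinality at most ℵ₁. -/
theorem fastClub_aleph2_cc
    (hCH : (2 : Cardinal.{1}) ^ Cardinal.aleph 0 = Cardinal.aleph 1)
    (A : Set FastClubCond)
    (hA : ∀ p ∈ A, ∀ q ∈ A, p ≠ q → ¬ ∃ r : FastClubCond, FCExtends r p ∧ FCExtends r q) :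
    Cardinal.mk ↥A ≤ Cardinal.aleph 1 := by
  let F : A → {t : Set Ordinal.{0} // t ⊆ Set.Iio omega1 ∧ Cardinal.mk t ≤ Cardinal.aleph0} :=
    fun p => ⟨p.1.c, p.1.c_sub, Cardinal.mk_le_aleph0_iff.2 p.1.c_countable⟩
  have hF : Function.Injective F := by
    rintro ⟨p, hp⟩ ⟨q, hq⟩ h
    have hc : p.c = q.c := congrArg Subtype.val h
    by_contra hne
    refine hA p hp q hq (fun e => hne (Subtype.ext e)) ?_
    refine ⟨⟨p.c, p.E ∩ q.E, p.c_sub, p.c_countable, p.c_closed,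
      club_inter p.E_club q.E_club⟩, ?_, ?_⟩
    · exact ⟨subset_rfl, fun x h1 h2 => absurd h1 h2, Set.inter_subset_left,
        fun x h1 h2 => absurd h1 h2⟩
    · exact ⟨hc.ge, fun x h1 h2 => absurd (hc ▸ h1) h2, Set.inter_subset_right,
        fun x h1 h2 => absurd (hc ▸ h1) h2⟩
  have hI : Cardinal.mk (Set.Iio omega1) = Cardinal.aleph 1 := by
    rw [Cardinal.mk_Iio_ordinal, omega1, Cardinal.card_ord, Cardinal.lift_aleph]
    simp
  refine (Cardinal.mk_le_of_injective hF).trans ((Cardinal.mk_bounded_subset_le _ _).trans ?_)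
  rw [hI, max_eq_left (Cardinal.aleph0_le_aleph 1), ← hCH, Cardinal.aleph_zero, ← Cardinal.power_mul,
    Cardinal.aleph0_mul_aleph0]
end

section
/- For every club D ⊆ ω₁ and every ordinal γ < ω₁, the set of conditions (c, E) of the fast club poset such that E ⊆ D and c contains an element greater than γ is dense: every condition of the fast club poset has an extension lying in this set. -/
theorem fc_countable_bdd {ι : Type*} [Countable ι] (f : ι → Ordinal.{0})
    (hf : ∀ i, f i < omega1) : ∃ b < omega1, ∀ i, f i ≤ b := by
  refine ⟨⨆ i, f i, ?_, fun i => ?_⟩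
  · have h : omega1 = Ordinal.omega 1 := Cardinal.ord_aleph 1
    rw [h] at hf ⊢
    exact Ordinal.iSup_lt_omega_one hf
  · exact le_ciSup (Ordinal.bddAbove_of_small (s := Set.range f)) i

theorem fc_inter {D E : Set Ordinal.{0}} (hD : IsClubIn D omega1) (hE : IsClubIn E omega1) :
    IsClubIn (D ∩ E) omega1 := by
  obtain ⟨hD1, hD2, hD3⟩ := hD
  obtain ⟨hE1, hE2, hE3⟩ := hE
  refine ⟨fun x hx => hD1 hx.1, ?_, ?_⟩
  · intro α h1 h2 h3
    refine ⟨hD2 α h1 h2 fun β hβ => ?_, hE2 α h1 h2 fun β hβ => ?_⟩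
    · obtain ⟨g, hg, h⟩ := h3 β hβ
      exact ⟨g, hg.1, h⟩
    · obtain ⟨g, hg, h⟩ := h3 β hβ
      exact ⟨g, hg.2, h⟩
  · intro β hβ
    have key : ∀ x : Set.Iio omega1, ∃ y : Set.Iio omega1,
        x.1 < y.1 ∧ y.1 ∈ D ∧ ∃ z ∈ E, x.1 < z ∧ z < y.1 := by
      intro x
      obtain ⟨z, hz, hxz⟩ := hE3 x.1 x.2
      obtain ⟨y, hy, hzy⟩ := hD3 z (hE1 hz)
      exact ⟨⟨y, hD1 hy⟩, hxz.trans hzy, hy, z, hz, hxz, hzy⟩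
    choose g hg1 hg2 hg3 using key
    let s : ℕ → Set.Iio omega1 := fun n => g^[n] ⟨β, hβ⟩
    have hs : ∀ n, s (n+1) = g (s n) := fun n => Function.iterate_succ_apply' g n _
    have hlt : ∀ n, (s n).1 < (s (n+1)).1 := fun n => by rw [hs]; exact hg1 _
    obtain ⟨b, hb, hsb⟩ := fc_countable_bdd (fun n => (s n).1) (fun n => (s n).2)
    let α := ⨆ n, (s n).1
    have hα : α < omega1 := (ciSup_le hsb).trans_lt hb
    have hle : ∀ n, (s n).1 < α := fun n =>
      (hlt n).trans_le (le_ciSup (f := fun n => (s n).1)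
        (Ordinal.bddAbove_of_small (s := Set.range fun n => (s n).1)) (n+1))
    have hβα : β < α := hle 0
    have hpos : 0 < α := (zero_le : 0 ≤ β).trans_lt hβα
    refine ⟨α, ⟨hD2 α hα hpos ?_, hE2 α hα hpos ?_⟩, hβα⟩
    · intro x hx
      obtain ⟨n, hn⟩ := exists_lt_of_lt_ciSup hx
      refine ⟨(s (n+1)).1, ?_, hn.trans (hlt n), hle _⟩
      rw [hs]
      exact hg2 _
    · intro x hx
      obtain ⟨n, hn⟩ := exists_lt_of_lt_ciSup hx
      obtain ⟨z, hz, h1, h2⟩ := hg3 (s n)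
      rw [← hs] at h2
      exact ⟨z, hz, hn.trans h1, h2.trans (hle _)⟩

/-- For every club `D ⊆ ω₁` and every `γ < ω₁`, the set of conditions `(c, E)`
with `E ⊆ D` and `c` containing an element greater than `γ` is dense in the
fast club poset. -/
theorem fastClub_dense (D : Set Ordinal.{0}) (hD : IsClubIn D omega1)
    (γ : Ordinal.{0}) (hγ : γ < omega1) (p : FastClubCond) :
    ∃ q : FastClubCond, FCExtends q p ∧ q.E ⊆ D ∧ ∃ α ∈ q.c, γ < α := by
  obtain ⟨b, hb, hcb⟩ : ∃ b < omega1, ∀ y ∈ p.c, y ≤ b := by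
    have := p.c_countable.to_subtype
    obtain ⟨b, hb, h⟩ := fc_countable_bdd (fun y : p.c => y.1) (fun y => p.c_sub y.2)
    exact ⟨b, hb, fun y hy => h ⟨y, hy⟩⟩
  obtain ⟨x, hx, hbx⟩ := p.E_club.2.2 (max b γ) (max_lt hb hγ)
  have hx1 := p.E_club.1 hx
  have hcx : ∀ y ∈ p.c, y < x := fun y hy =>
    (hcb y hy).trans_lt ((le_max_left _ _).trans_lt hbx)
  refine ⟨⟨insert x p.c, D ∩ p.E, Set.insert_subset hx1 p.c_sub, p.c_countable.insert x, ?_,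
    fc_inter hD p.E_club⟩, ⟨Set.subset_insert _ _, ?_, Set.inter_subset_right, ?_⟩,
    Set.inter_subset_left, x, Set.mem_insert _ _, (le_max_right _ _).trans_lt hbx⟩
  · intro α h1 h2 h3
    rcases lt_or_ge x α with h | h
    · obtain ⟨g, hg, hxg, _⟩ := h3 x h
      rcases hg with rfl | hg
      · exact absurd hxg (lt_irrefl _)
      · exact absurd hxg (hcx g hg).not_gt
    · refine Or.inr (p.c_closed α h1 h2 fun β hβ => ?_)
      obtain ⟨g, hg, hh⟩ := h3 β hβ
      rcases hg with rfl | hg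
      · exact absurd hh.2 h.not_gt
      · exact ⟨g, hg, hh⟩
  · rintro z (rfl | hz) hn
    · exact hcx
    · exact absurd hz hn
  · rintro z (rfl | hz) hn
    · exact hx
    · exact absurd hz hn
end

section
/- Let λ be an infinite cardinal, and for each ξ < λ let ≺_ξ be a well-order (a well-founded strict linear order) on a set A_ξ. Suppose 𝒲 ⊆ Π_{ξ<λ} A_ξ is a family of functions such that for any two distinct f, g ∈ 𝒲 there exist ξ < λ and ξ' < λ with f(ξ) ≺_ξ g(ξ) and g(ξ') ≺_{ξ'} f(ξ'). Then the cardinality of 𝒲 is at most 2^λ. -/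
universe u

/-- Let `lam` be an infinite cardinal, `ι` an index set of cardinality `lam`,
and for each `ξ : ι` let `r ξ` be a well-order on `A ξ`.  If `W` is a family of
functions in the product `∀ ξ, A ξ` such that any two distinct members `f, g`
of `W` satisfy `f ξ ≺_ξ g ξ` at some coordinate `ξ` and `g ξ' ≺_{ξ'} f ξ'` at
some coordinate `ξ'`, then `W` has cardinality at most `2 ^ lam`. -/
theorem erdosRado_antichain_bound (lam : Cardinal.{u}) (hlam : Cardinal.aleph0 ≤ lam)
    (ι : Type u) (hι : Cardinal.mk ι = lam)
    (A : ι → Type u) (r : ∀ ξ, A ξ → A ξ → Prop)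
    (hr : ∀ ξ, IsWellOrder (A ξ) (r ξ))
    (W : Set (∀ ξ, A ξ))
    (hW : ∀ f ∈ W, ∀ g ∈ W, f ≠ g →
      (∃ ξ, r ξ (f ξ) (g ξ)) ∧ ∃ ξ', r ξ' (g ξ') (f ξ')) :
    Cardinal.mk ↥W ≤ 2 ^ lam := by
  classical
  rcases W.eq_empty_or_nonempty with rfl | ⟨w0, hw0⟩
  · simp
  -- `R a c h`: the function `h` realizes the type coded by `a` over the parameters `c`.
  let R : (ι → Option Bool) → (ι → W) → W → Prop := fun a c h =>
    ∀ ξ, (a ξ = some true → h.1 ξ = (c ξ).1 ξ) ∧ (a ξ = some false → r ξ (h.1 ξ) ((c ξ).1 ξ))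
  let B : Option (ι → Option Bool) → Type u := fun o => {_ξ : ι // o.isSome}
  let step : (Σ o, B o → W) → W := fun p =>
    match p with
    | ⟨none, _⟩ => ⟨w0, hw0⟩
    | ⟨some a, c⟩ =>
      if h : ∃ h, R a (fun ξ => c ⟨ξ, rfl⟩) h then h.choose else ⟨w0, hw0⟩
  let T := WType B
  let ev : T → W := WType.elim W step
  have hstep : ∀ a c, (∃ h, R a c h) → R a c (step ⟨some a, fun ξ => c ξ.1⟩) := by
    intro a c h
    simp only [step, dif_pos h]
    exact h.choose_spec
  have hcard : Cardinal.mk T ≤ 2 ^ lam := by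
    apply WType.cardinalMk_le_of_le
    have hle : ∀ o, ((2 : Cardinal.{u}) ^ lam) ^ Cardinal.mk (B o) ≤ (2 ^ lam) ^ lam := fun o =>
      Cardinal.power_le_power_left (Cardinal.power_ne_zero _ two_ne_zero)
        (hι ▸ Cardinal.mk_subtype_le _)
    refine (Cardinal.sum_le_sum _ _ hle).trans ?_
    rw [Cardinal.sum_const', ← Cardinal.power_mul, Cardinal.mul_eq_self hlam]
    have hinf := hlam.trans (Cardinal.cantor lam).le
    refine Cardinal.mul_le_of_le hinf ?_ le_rfl
    · rw [Cardinal.mk_option]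
      refine Cardinal.add_le_of_le hinf ?_ (Cardinal.one_le_aleph0.trans hinf)
      rw [Cardinal.mk_arrow, Cardinal.lift_uzero, hι]
      refine (Cardinal.power_le_power_right (c := lam) (b := Cardinal.aleph0)
        (Cardinal.lift_le_aleph0.2 Cardinal.mk_le_aleph0)).trans ?_
      exact (Cardinal.power_le_power_right hlam).trans (Cardinal.power_self_eq hlam).le
  have hsurj : Function.Surjective ev := by
    intro g
    by_contra hg
    have key : ∀ ξ, ∃ (o : Option Bool) (t : T),
        (o = some true → g.1 ξ = (ev t).1 ξ) ∧ (o = some false → r ξ (g.1 ξ) ((ev t).1 ξ)) ∧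
        ∀ s : T, (o = some true → (ev s).1 ξ = (ev t).1 ξ) →
          (o = some false → r ξ ((ev s).1 ξ) ((ev t).1 ξ)) → ¬ r ξ (g.1 ξ) ((ev s).1 ξ) := by
      intro ξ
      have := hr ξ
      by_cases hex : ∃ t : T, ¬ r ξ ((ev t).1 ξ) (g.1 ξ)
      · -- choose `t` with `ev t ξ` minimal among the values that are at least `g ξ`
        obtain ⟨t, ht, hmin⟩ := (InvImage.wf (fun t : T => (ev t).1 ξ)
          (IsWellFounded.wf (r := r ξ))).has_min {t : T | ¬ r ξ ((ev t).1 ξ) (g.1 ξ)} hex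
        rcases trichotomous_of (r ξ) (g.1 ξ) ((ev t).1 ξ) with h | h | h
        · refine ⟨some false, t, by simp, fun _ => h, fun s _ hs hgs => ?_⟩
          exact hmin s (fun h' => asymm_of (r ξ) hgs h') (hs rfl)
        · refine ⟨some true, t, fun _ => h, by simp, fun s hs _ hgs => ?_⟩
          rw [hs rfl, ← h] at hgs
          exact irrefl_of (r ξ) _ hgs
        · exact absurd h ht
      · push Not at hex
        refine ⟨none, WType.mk none (fun x => absurd x.2 (by simp)), by simp, by simp,
          fun s _ _ hgs => asymm_of (r ξ) hgs (hex s)⟩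
    choose a t h1 h2 h3 using key
    have hR := hstep a (fun ξ => ev (t ξ)) ⟨g, fun ξ => ⟨h1 ξ, h2 ξ⟩⟩
    have he : ev (WType.mk (some a) (fun ξ => t ξ.1)) = step ⟨some a, fun ξ => ev (t ξ.1)⟩ := rfl
    rw [← he] at hR
    have hne : g.1 ≠ (ev (WType.mk (some a) (fun ξ => t ξ.1))).1 := fun h => hg ⟨_, (Subtype.ext h).symm⟩
    obtain ⟨ξ, hξ⟩ := (hW _ g.2 _ (ev (WType.mk (some a) (fun ξ => t ξ.1))).2 hne).1
    exact h3 ξ _ (hR ξ).1 (hR ξ).2 hξ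
  exact (Cardinal.mk_le_of_surjective hsurj).trans hcard
end

section
/- Let κ be a singular strong limit cardinal whose cofinality λ is uncountable, let ⟨κ_ξ : ξ < λ⟩ be a strictly increasing sequence of ordinals cofinal in κ, and for each ξ < λ let ≺_ξ be a well-order of the power set 𝒫(κ_ξ). Define a relation R on 𝒫(κ) by: X R Y iff there exists β < λ such that X ∩ κ_ξ ≺_ξ Y ∩ κ_ξ for every ξ with β ≤ ξ < λ. Then for every nonempty family ℱ ⊆ 𝒫(κ), the set 𝒲 of R-minimal elements of ℱ (those X ∈ ℱ such that no Y ∈ ℱ satisfies Y R X) is nonempty and has cardinality at most 2^λ; in particular, |𝒲| < κ. -/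
open Cardinal in
theorem antichain_bound {I W : Type 1} [Infinite I] [Nonempty W] (f : W → I → Ordinal.{1})
    (hf : ∀ x y, (∀ i, f x i ≤ f y i) → x = y) : #W ≤ 2 ^ #I := by
  classical
  let β : Set I → Type 1 := fun s => s
  let op : (Σ s : Set I, β s → W) → W := fun p =>
    if h : ∃ w, ∀ i : p.1, f w i < f (p.2 i) i then h.choose else Classical.arbitrary W
  have hop : ∀ (s : Set I) (a : β s → W), (∃ w, ∀ i : s, f w i < f (a i) i) →
      ∀ i : s, f (op ⟨s, a⟩) i < f (a i) i := by
    intro s a h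
    simp only [op]
    rw [dif_pos h]
    exact h.choose_spec
  have hsurj : Function.Surjective (WType.elim (β := β) W op) := by
    intro w
    let s : Set I := {i | ∃ t : WType β, f w i < f (WType.elim W op t) i}
    have hmin : ∀ i : s, ∃ t : WType β, f w i < f (WType.elim W op t) i ∧
        ∀ t' : WType β, f w i < f (WType.elim W op t') i →
          f (WType.elim W op t) i ≤ f (WType.elim W op t') i := by
      rintro ⟨i, hi⟩
      obtain ⟨t, ht, hm⟩ := (InvImage.wf (fun t : WType β => f (WType.elim W op t) i)
        (wellFounded_lt (α := Ordinal.{1}))).has_min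
        {t : WType β | f w i < f (WType.elim W op t) i} hi
      exact ⟨t, ht, fun t' ht' => not_lt.1 (hm t' ht')⟩
    choose g hg1 hg2 using hmin
    refine ⟨WType.mk s g, ?_⟩
    apply hf
    intro i
    by_contra hlt
    rw [not_le] at hlt
    have hi : i ∈ s := ⟨_, hlt⟩
    have h1 := hop s (fun b => WType.elim W op (g b)) ⟨w, hg1⟩ ⟨i, hi⟩
    have h2 := hg2 ⟨i, hi⟩ _ hlt
    exact absurd h1 (not_lt.2 h2)
  refine (mk_le_of_surjective hsurj).trans (WType.cardinalMk_le_of_le ?_)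
  have hI : ℵ₀ ≤ #I := aleph0_le_mk I
  calc (sum fun s : Set I => (2 ^ #I : Cardinal.{1}) ^ #(β s))
      ≤ sum fun s : Set I => (2 ^ #I : Cardinal.{1}) := by
        apply sum_le_sum
        intro s
        have : #(β s) ≤ #I := mk_set_le s
        calc (2 ^ #I : Cardinal.{1}) ^ #(β s) = 2 ^ (#I * #(β s)) := (power_mul).symm
          _ ≤ 2 ^ (#I * #I) := power_le_power_left two_ne_zero (mul_le_mul_right this _)
          _ = 2 ^ #I := by rw [mul_eq_self hI]
    _ = 2 ^ #I * 2 ^ #I := by simp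
    _ = 2 ^ #I := mul_eq_self (hI.trans (cantor _).le)


/-- Let `κ` be a singular strong limit cardinal whose cofinality `lam` is
uncountable, let `⟨k ξ : ξ < lam.ord⟩` be a strictly increasing sequence of
ordinals cofinal in `κ.ord`, and for each `ξ` let `prec ξ` be a well-order of
the power set of `k ξ`.  Define `R X Y` iff `X ∩ k ξ ≺_ξ Y ∩ k ξ` for all
sufficiently large `ξ`.  Then for every nonempty family `F` of subsets of `κ`,
the set of `R`-minimal elements of `F` is nonempty and of cardinality at most
`2 ^ lam`; in particular it has cardinality less than `κ`. -/
theorem minimal_sets_bound (κ : Cardinal.{0})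
    (hsl : ∀ μ < κ, (2 : Cardinal.{0}) ^ μ < κ)
    (lam : Cardinal.{0}) (hlam : lam = κ.ord.cof)
    (hsing : lam < κ) (hunc : Cardinal.aleph0 < lam)
    (k : {ξ : Ordinal.{0} // ξ < lam.ord} → Ordinal.{0})
    (hmono : ∀ ξ ζ, ξ < ζ → k ξ < k ζ)
    (hlt : ∀ ξ, k ξ < κ.ord)
    (hcofk : ∀ α < κ.ord, ∃ ξ, α < k ξ)
    (prec : ∀ ξ, Set {β : Ordinal.{0} // β < k ξ} → Set {β : Ordinal.{0} // β < k ξ} → Prop)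
    (hwo : ∀ ξ, IsWellOrder (Set {β : Ordinal.{0} // β < k ξ}) (prec ξ))
    (R : Set {β : Ordinal.{0} // β < κ.ord} → Set {β : Ordinal.{0} // β < κ.ord} → Prop)
    (hR : ∀ X Y, R X Y ↔ ∃ β < lam.ord, ∀ ξ : {ξ : Ordinal.{0} // ξ < lam.ord}, β ≤ ξ.1 →
      prec ξ {y | (⟨y.1, y.2.trans (hlt ξ)⟩ : {β : Ordinal.{0} // β < κ.ord}) ∈ X}
             {y | (⟨y.1, y.2.trans (hlt ξ)⟩ : {β : Ordinal.{0} // β < κ.ord}) ∈ Y})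
    (F : Set (Set {β : Ordinal.{0} // β < κ.ord})) (hF : F.Nonempty) :
    {X ∈ F | ¬ ∃ Y ∈ F, R Y X}.Nonempty ∧
    Cardinal.mk ↥{X ∈ F | ¬ ∃ Y ∈ F, R Y X} ≤ Cardinal.lift.{1} (2 ^ lam) ∧
    Cardinal.mk ↥{X ∈ F | ¬ ∃ Y ∈ F, R Y X} < Cardinal.lift.{1} κ := by
  have hc : lam.ord.cof = lam := by rw [hlam, Ordinal.cof_ord_cof]
  have hlim : ∀ α < lam.ord, ∀ β < lam.ord, max α β < lam.ord := fun α h1 β h2 => max_lt h1 h2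
  -- well-foundedness
  have hwf : WellFounded R := by
    rw [wellFounded_iff_isEmpty_descending_chain]
    refine ⟨fun ⟨X, hX⟩ => ?_⟩
    have hX' := fun n => (hR _ _).1 (hX n)
    choose b hb hbX using hX'
    have hsup : (⨆ n, b n) < lam.ord := by
      apply Ordinal.iSup_lt_of_lt_cof _ hb
      rw [hc]; simpa using hunc
    have := hwo ⟨_, hsup⟩
    obtain ⟨n, hn⟩ := WellFounded.not_rel_apply_succ (r := prec ⟨_, hsup⟩)
      (fun n => {y | (⟨y.1, y.2.trans (hlt _)⟩ : {β : Ordinal.{0} // β < κ.ord}) ∈ X n})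
    exact hn (hbX n ⟨_, hsup⟩ (Ordinal.le_iSup b n))
  have hne : {X ∈ F | ¬ ∃ Y ∈ F, R Y X}.Nonempty := by
    obtain ⟨X, hX, hm⟩ := hwf.has_min F hF
    exact ⟨X, hX, fun ⟨Y, hY, h⟩ => hm Y hY h⟩
  have hcard : Cardinal.mk {ξ : Ordinal.{0} // ξ < lam.ord} = Cardinal.lift.{1} lam := by
    have := Cardinal.mk_Iio_ordinal lam.ord
    rw [Cardinal.card_ord] at this
    exact this
  have hinf : Infinite {ξ : Ordinal.{0} // ξ < lam.ord} := by
    rw [Cardinal.infinite_iff, hcard]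
    simpa using hunc.le
  have hbd : Cardinal.mk ↥{X ∈ F | ¬ ∃ Y ∈ F, R Y X} ≤ Cardinal.lift.{1} (2 ^ lam) := by
    have := hne.to_subtype
    rw [Cardinal.lift_power, Cardinal.lift_two, ← hcard]
    refine antichain_bound (fun X ξ => Ordinal.typein (prec ξ)
      {y | (⟨y.1, y.2.trans (hlt ξ)⟩ : {β : Ordinal.{0} // β < κ.ord}) ∈ X.1}) ?_
    intro X Y h
    by_contra hXY
    have hXY' : X.1 ≠ Y.1 := fun h => hXY (Subtype.ext h)
    obtain ⟨a, ha⟩ : ∃ a, ¬ (a ∈ X.1 ↔ a ∈ Y.1) := by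
      by_contra! hcon
      exact hXY' (Set.ext hcon)
    obtain ⟨ξ₀, hξ₀⟩ := hcofk a.1 a.2
    refine Y.2.2 ⟨X.1, X.2.1, (hR _ _).2 ⟨ξ₀.1, ξ₀.2, fun ξ hξ => ?_⟩⟩
    have hk : k ξ₀ ≤ k ξ := by
      rcases hξ.eq_or_lt with h | h
      · rw [Subtype.ext h]
      · exact (hmono _ _ h).le
    rw [← Ordinal.typein_lt_typein (prec ξ)]
    refine lt_of_le_of_ne (h ξ) ?_
    rw [Ne, Ordinal.typein_inj]
    intro he
    exact ha (Set.ext_iff.1 he ⟨a.1, hξ₀.trans_le hk⟩)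
  exact ⟨hne, hbd, hbd.trans_lt (Cardinal.lift_lt.2 (hsl _ hsing))⟩
end

section
/- For all bistationary sets S, S' ⊆ ω₁, the linear orders Φ(S) and Φ(S') are order-isomorphic if and only if the symmetric difference S △ S' is nonstationary in ω₁. -/
/-- `S` is stationary in `ω₁`: it meets every club in `ω₁`. -/
def IsStationaryIn (S : Set Ordinal.{0}) : Prop :=
  ∀ C : Set Ordinal.{0}, IsClubIn C omega1 → (S ∩ C).Nonempty

/-- The ordinals below `ω₁`. -/
def SmallOrd : Type 1 := {α : Ordinal.{0} // α < omega1}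

noncomputable instance : LinearOrder SmallOrd := Subtype.instLinearOrder _

/-- The underlying set of the linear order `Φ(S) = η + Σ_{α<ω₁} η_α`, realized
inside the lexicographic product `(WithBot SmallOrd) ×ₗ ℚ`: the fiber over `⊥`
is a copy of `η`; the fiber over `α ∈ S` is `{q : ℚ | 0 ≤ q} ≅ 1 + η`; and the
fiber over `α ∉ S` is `ℚ ≅ η`.  It carries the induced (lexicographic) linear
order. -/
def PhiSet (S : Set Ordinal.{0}) : Set (Lex (WithBot SmallOrd × ℚ)) :=
  {x | ∀ a : SmallOrd, (ofLex x).1 = (a : WithBot SmallOrd) → a.1 ∈ S → 0 ≤ (ofLex x).2}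

namespace PhiAux

def PLe (p : WithBot SmallOrd) (α : Ordinal.{0}) : Prop :=
  ∀ a : SmallOrd, p = (a : WithBot SmallOrd) → a.1 ≤ α

def PLt (p : WithBot SmallOrd) (α : Ordinal.{0}) : Prop :=
  ∀ a : SmallOrd, p = (a : WithBot SmallOrd) → a.1 < α

lemma omega1_eq : omega1 = Ordinal.omega 1 := by
  simp [omega1]

lemma succ_lt_omega1 {a : Ordinal.{0}} (h : a < omega1) : Order.succ a < omega1 := by
  have : Order.IsSuccLimit omega1 := by
    rw [omega1_eq]; exact Cardinal.isSuccLimit_omega 1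
  exact this.succ_lt h

lemma zero_lt_omega1 : (0 : Ordinal.{0}) < omega1 := by
  rw [omega1_eq]; exact Ordinal.omega_pos 1

lemma iSup_lt_omega1 {f : ℕ → Ordinal.{0}} (h : ∀ n, f n < omega1) : iSup f < omega1 := by
  rw [omega1_eq] at *
  exact Ordinal.iSup_lt_omega_one h

lemma club_closure (Q : Ordinal.{0} → Ordinal.{0} → Prop)
    (hmono : ∀ a a' c c', Q a c → a' ≤ a → c ≤ c' → Q a' c')
    (hex : ∀ a < omega1, ∃ c < omega1, Q a c) :
    IsClubIn {d | d < omega1 ∧ 0 < d ∧ ∀ a < d, ∃ c < d, Q a c} omega1 := by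
  refine ⟨fun d hd => hd.1, ?_, ?_⟩
  · intro d hd h0 hlim
    refine ⟨hd, h0, fun a ha => ?_⟩
    obtain ⟨e, he, hae, hed⟩ := hlim a ha
    obtain ⟨c, hc, hQ⟩ := he.2.2 a hae
    exact ⟨c, hc.trans hed, hQ⟩
  · intro b hb
    choose R hR hRQ using hex
    let step : {a : Ordinal.{0} // a < omega1} → {a : Ordinal.{0} // a < omega1} :=
      fun a => ⟨Order.succ (max a.1 (R a.1 a.2)), succ_lt_omega1 (max_lt a.2 (hR _ _))⟩
    let s : ℕ → {a : Ordinal.{0} // a < omega1} :=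
      fun n => Nat.rec ⟨Order.succ b, succ_lt_omega1 hb⟩ (fun _ a => step a) n
    have hs : ∀ n, s (n+1) = step (s n) := fun n => rfl
    have hle : ∀ n, (s n).1 ≤ ⨆ n, (s n).1 := fun n => Ordinal.le_iSup (fun n => (s n).1) n
    have hb0 : b < ⨆ n, (s n).1 := lt_of_lt_of_le (Order.lt_succ b) (hle 0)
    refine ⟨⨆ n, (s n).1, ⟨iSup_lt_omega1 fun n => (s n).2, lt_of_le_of_lt (zero_le) hb0, ?_⟩, hb0⟩
    intro a ha
    obtain ⟨n, hn⟩ := Ordinal.lt_iSup_iff.1 ha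
    refine ⟨R (s n).1 (s n).2, ?_, hmono _ _ _ _ (hRQ _ _) hn.le le_rfl⟩
    refine lt_of_lt_of_le ?_ (hle (n+1))
    rw [hs]
    exact Order.lt_succ_of_le (le_max_right _ _)

lemma bound_exists {S S' : Set Ordinal.{0}} (f : PhiSet S ≃o PhiSet S') (a : Ordinal.{0})
    (ha : a < omega1) : ∃ c < omega1, ∀ x : PhiSet S,
      PLe (ofLex x.1).1 a → PLe (ofLex (f x).1).1 c := by
  let u : SmallOrd := ⟨Order.succ a, succ_lt_omega1 ha⟩
  let y : PhiSet S := ⟨toLex ((u : WithBot SmallOrd), (1:ℚ)), fun _ _ _ => by simp⟩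
  have key : ∀ x : PhiSet S, PLe (ofLex x.1).1 a → (ofLex (f x).1).1 ≤ (ofLex (f y).1).1 := by
    intro x hx
    apply Prod.Lex.monotone_fst
    have : x ≤ y := by
      apply le_of_lt
      change x.1 < y.1
      rw [Prod.Lex.lt_iff]
      left
      change (ofLex x.1).1 < (u : WithBot SmallOrd)
      cases h : (ofLex x.1).1 with
      | bot => exact WithBot.bot_lt_coe _
      | coe v =>
        exact WithBot.coe_lt_coe.2 (lt_of_le_of_lt (hx v h) (Order.lt_succ a) : v.1 < Order.succ a)
    exact f.monotone this
  cases h : (ofLex (f y).1).1 with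
  | bot =>
    refine ⟨0, zero_lt_omega1, fun x hx b hb => ?_⟩
    have := key x hx
    rw [h, hb] at this
    simp at this
  | coe v =>
    refine ⟨v.1, v.2, fun x hx b hb => ?_⟩
    have := key x hx
    rw [h, hb] at this
    have h3 : b ≤ v := WithBot.coe_le_coe.1 this
    exact h3

lemma agree {S S' : Set Ordinal.{0}} (f : PhiSet S ≃o PhiSet S') (d : Ordinal.{0})
    (hd : d < omega1)
    (h1 : ∀ x : PhiSet S, PLt (ofLex x.1).1 d → PLt (ofLex (f x).1).1 d)
    (h2 : ∀ y : PhiSet S', PLt (ofLex y.1).1 d → PLt (ofLex (f.symm y).1).1 d)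
    (hS : d ∈ S) : d ∈ S' := by
  by_contra hS'
  let u : SmallOrd := ⟨d, hd⟩
  have hlt : ∀ p : WithBot SmallOrd, PLt p d ↔ p < u := by
    intro p
    cases p with
    | bot => exact ⟨fun _ => WithBot.bot_lt_coe _, fun _ a h => by simp at h⟩
    | coe v =>
      constructor
      · intro h; exact WithBot.coe_lt_coe.2 (h v rfl : v.1 < d)
      · intro h a ha
        rw [WithBot.coe_inj] at ha
        subst ha
        have h3 : v < u := WithBot.coe_lt_coe.1 h
        exact h3
  simp only [hlt] at h1 h2
  let x : PhiSet S := ⟨toLex ((u : WithBot SmallOrd), (0:ℚ)), fun _ _ _ => by simp⟩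
  have hmin : ∀ z : PhiSet S, (u : WithBot SmallOrd) ≤ (ofLex z.1).1 → x ≤ z := by
    intro z hz
    change x.1 ≤ z.1
    rw [Prod.Lex.le_iff]
    rcases hz.lt_or_eq with h | h
    · exact Or.inl h
    · exact Or.inr ⟨h, z.2 u h.symm hS⟩
  have hfx : (u : WithBot SmallOrd) ≤ (ofLex (f x).1).1 := by
    by_contra hc
    have := h2 _ (not_le.1 hc)
    rw [f.symm_apply_apply] at this
    exact lt_irrefl _ this
  -- a smaller element
  have hmem : ∀ q : ℚ, toLex ((u : WithBot SmallOrd), q) ∈ PhiSet S' := by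
    intro q a ha haS
    have : u = a := WithBot.coe_inj.1 ha
    subst this
    exact absurd haS hS'
  have hno : ∀ q : ℚ, ¬ (⟨toLex ((u : WithBot SmallOrd), q), hmem q⟩ : PhiSet S') < f x := by
    intro q hq
    have hh := hmin (f.symm ⟨toLex ((u : WithBot SmallOrd), q), hmem q⟩) (by
      by_contra hc
      have := h1 _ (not_le.1 hc)
      rw [f.apply_symm_apply] at this
      exact lt_irrefl _ this)
    have := (f.le_symm_apply).1 hh
    exact absurd hq (not_lt.2 this)
  apply hno ((ofLex (f x).1).2 - 1)
  change _ < (f x).1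
  rw [Prod.Lex.lt_iff]
  rcases hfx.lt_or_eq with h | h
  · exact Or.inl h
  · exact Or.inr ⟨h, by simp⟩

lemma forward {S S' : Set Ordinal.{0}} (f : PhiSet S ≃o PhiSet S') :
    ¬ IsStationaryIn (symmDiff S S') := by
  intro hst
  have hclub := club_closure
    (fun a c => (∀ x : PhiSet S, PLe (ofLex x.1).1 a → PLe (ofLex (f x).1).1 c) ∧
      (∀ x : PhiSet S', PLe (ofLex x.1).1 a → PLe (ofLex (f.symm x).1).1 c))
    (by
      rintro a a' c c' ⟨h1, h2⟩ ha hc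
      exact ⟨fun x hx b hb => (h1 x (fun e he => (hx e he).trans ha) b hb).trans hc,
        fun x hx b hb => (h2 x (fun e he => (hx e he).trans ha) b hb).trans hc⟩)
    (by
      intro a ha
      obtain ⟨c, hc, h1⟩ := bound_exists f a ha
      obtain ⟨c', hc', h2⟩ := bound_exists f.symm a ha
      exact ⟨max c c', max_lt hc hc', fun x hx b hb => (h1 x hx b hb).trans (le_max_left _ _),
        fun x hx b hb => (h2 x hx b hb).trans (le_max_right _ _)⟩)
  obtain ⟨d, hdS, hd, hd0, hQ⟩ := hst _ hclub
  have key : ∀ p : WithBot SmallOrd, PLt p d → ∃ a < d, PLe p a := by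
    intro p hp
    cases p with
    | bot => exact ⟨0, hd0, fun a ha => by simp at ha⟩
    | coe v => 
      refine ⟨v.1, hp v rfl, fun a ha => ?_⟩
      rw [WithBot.coe_inj] at ha
      rw [ha]
  have h1 : ∀ x : PhiSet S, PLt (ofLex x.1).1 d → PLt (ofLex (f x).1).1 d := by
    intro x hx
    obtain ⟨a, ha, hxa⟩ := key _ hx
    obtain ⟨c, hc, h⟩ := hQ a ha
    exact fun b hb => (h.1 x hxa b hb).trans_lt hc
  have h2 : ∀ x : PhiSet S', PLt (ofLex x.1).1 d → PLt (ofLex (f.symm x).1).1 d := by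
    intro x hx
    obtain ⟨a, ha, hxa⟩ := key _ hx
    obtain ⟨c, hc, h⟩ := hQ a ha
    exact fun b hb => (h.2 x hxa b hb).trans_lt hc
  rcases hdS with ⟨h, h'⟩ | ⟨h, h'⟩
  · exact h' (agree f d hd h1 h2 h)
  · exact h' (agree f.symm d hd h2 h1 h)

abbrev LL := Lex (WithBot SmallOrd × ℚ)

lemma glue {L B : Type*} [LinearOrder L] [PartialOrder B] (A A' : Set L) (p q : L → B)
    (hp : MonotoneOn p A) (hq : MonotoneOn q A')
    (h : ∀ b, Nonempty (({x | x ∈ A ∧ p x = b} : Set L) ≃o ({x | x ∈ A' ∧ q x = b} : Set L))) :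
    Nonempty (A ≃o A') := by
  let e := fun b => (h b).some
  let F : A → A' := fun x => ⟨(e (p x.1) ⟨x.1, x.2, rfl⟩).1, (e (p x.1) ⟨x.1, x.2, rfl⟩).2.1⟩
  have hF : ∀ x : A, q (F x).1 = p x.1 := fun x => (e (p x.1) ⟨x.1, x.2, rfl⟩).2.2
  have hFb : ∀ (b : B) (x : A) (hx : p x.1 = b), (F x).1 = (e b ⟨x.1, x.2, hx⟩).1 := by
    intro b x hx
    subst hx
    rfl
  have hmono : StrictMono F := by
    intro x y hxy
    rcases (hp x.2 y.2 hxy.le).lt_or_eq with h | h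
    · by_contra hc
      have := hq (F y).2 (F x).2 (not_lt.1 hc)
      rw [hF, hF] at this
      exact absurd h (not_lt_of_ge this)
    · change (F x).1 < (F y).1
      rw [hFb _ x h, hFb _ y rfl]
      exact (e (p y.1)).strictMono hxy
  refine ⟨hmono.orderIsoOfSurjective F ?_⟩
  intro y
  let z := (e (q y.1)).symm ⟨y.1, y.2, rfl⟩
  refine ⟨⟨z.1, z.2.1⟩, Subtype.ext ?_⟩
  rw [hFb (q y.1) ⟨z.1, z.2.1⟩ z.2.2]
  change ((e (q y.1)) z).1 = _
  simp [z]

lemma floor_exists {C : Set Ordinal.{0}} (hC : IsClubIn C omega1) (p : WithBot SmallOrd) :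
    ∃ b : WithBot SmallOrd, b ≤ p ∧ (∀ a : SmallOrd, b = a → a.1 ∈ C) ∧
      ∀ e : SmallOrd, e.1 ∈ C → (e : WithBot SmallOrd) ≤ p → (e : WithBot SmallOrd) ≤ b := by
  cases p with
  | bot => exact ⟨⊥, le_rfl, fun a h => by simp at h, fun e _ h => h⟩
  | coe v =>
    by_cases hne : ({g | g ∈ C ∧ g ≤ v.1} : Set Ordinal.{0}).Nonempty
    · set T : Set Ordinal.{0} := {g | g ∈ C ∧ g ≤ v.1} with hT
      have hbdd : BddAbove T := ⟨v.1, fun g hg => hg.2⟩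
      have hsv : sSup T ≤ v.1 := csSup_le hne fun g hg => hg.2
      have hs1 : sSup T < omega1 := lt_of_le_of_lt hsv v.2
      have hle : ∀ g ∈ T, g ≤ sSup T := fun g hg => le_csSup hbdd hg
      have hmem : sSup T ∈ C := by
        by_contra hn
        have hlt : ∀ g ∈ T, g < sSup T := fun g hg =>
          lt_of_le_of_ne (hle g hg) (fun h => hn (h ▸ hg.1))
        apply hn
        apply hC.2.1 _ hs1
        · obtain ⟨g, hg⟩ := hne
          exact lt_of_le_of_lt zero_le (hlt g hg)
        · intro b hb
          obtain ⟨g, hg, hbg⟩ := exists_lt_of_lt_csSup hne hb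
          exact ⟨g, hg.1, hbg, hlt g hg⟩
      let w : SmallOrd := ⟨sSup T, hs1⟩
      refine ⟨(w : WithBot SmallOrd), WithBot.coe_le_coe.2 hsv, ?_, ?_⟩
      · intro a ha
        rw [WithBot.coe_inj] at ha
        subst ha
        exact hmem
      · intro e he hev
        have hev' : e ≤ v := WithBot.coe_le_coe.1 hev
        exact WithBot.coe_le_coe.2 (hle e.1 ⟨he, hev'⟩)
    · refine ⟨⊥, bot_le, fun a h => by simp at h, fun e he hev => ?_⟩
      have hev' : e ≤ v := WithBot.coe_le_coe.1 hev
      exact absurd ⟨e.1, he, hev'⟩ hne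

lemma countable_below (e : SmallOrd) :
    {x : LL | (ofLex x).1 < (e : WithBot SmallOrd)}.Countable := by
  have h1 : (Set.Iio e.1).Countable := by
    rw [← Cardinal.le_aleph0_iff_set_countable, Cardinal.mk_Iio_ordinal]
    have h2 : e.1.card < Cardinal.aleph 1 := Cardinal.lt_ord.1 e.2
    rw [Cardinal.lt_aleph_one_iff] at h2
    simpa [← Ordinal.lift_card] using h2
  have h2 : (Set.Iio e).Countable := 
    (h1.preimage (f := fun a : SmallOrd => a.1) Subtype.val_injective)
  have h3 : (Set.Iio (e : WithBot SmallOrd)).Countable := by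
    refine ((h2.image (fun a : SmallOrd => (a : WithBot SmallOrd))).insert ⊥).mono ?_
    intro p hp
    cases p with
    | bot => exact Or.inl rfl
    | coe v => exact Or.inr ⟨v, WithBot.coe_lt_coe.1 hp, rfl⟩
  have h4 := h3.prod (Set.countable_univ (α := ℚ))
  refine (h4.preimage (f := fun x : LL => ofLex x) (fun a b h => h)).mono ?_
  intro x hx
  exact ⟨hx, trivial⟩

/-- The endpoint of a block. -/
def Sp (S : Set Ordinal.{0}) (c : WithBot SmallOrd → WithBot SmallOrd) (x : LL) : Prop :=
  (ofLex x).2 = 0 ∧ c (ofLex x).1 = (ofLex x).1 ∧ ∃ a : SmallOrd, a.1 ∈ S ∧ (ofLex x).1 = a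

def Blk (S : Set Ordinal.{0}) (c : WithBot SmallOrd → WithBot SmallOrd) (b : WithBot SmallOrd) :
    Set LL := {x | x ∈ PhiSet S ∧ c (ofLex x).1 = b ∧ ¬ Sp S c x}

lemma mem_Blk_pos {S : Set Ordinal.{0}} {c : WithBot SmallOrd → WithBot SmallOrd}
    {b a : WithBot SmallOrd} {q : ℚ} (h : c a = b) (hq : 0 < q) : toLex (a, q) ∈ Blk S c b :=
  ⟨fun _ _ _ => hq.le, h, fun hs => hq.ne' hs.1⟩

lemma mem_Blk_not {S : Set Ordinal.{0}} {c : WithBot SmallOrd → WithBot SmallOrd}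
    {b a : WithBot SmallOrd} {q : ℚ} (h : c a = b)
    (ha : ¬ ∃ u : SmallOrd, u.1 ∈ S ∧ a = u) : toLex (a, q) ∈ Blk S c b :=
  ⟨fun u hu hus => absurd ⟨u, hus, hu⟩ ha, h, fun hs => ha hs.2.2⟩

lemma mem_Blk_lt {S : Set Ordinal.{0}} {c : WithBot SmallOrd → WithBot SmallOrd}
    {b : WithBot SmallOrd} {x : LL} (hx : x ∈ Blk S c b) {q : ℚ} (hq : (ofLex x).2 < q) :
    toLex ((ofLex x).1, q) ∈ Blk S c b := by
  by_cases h : ∃ u : SmallOrd, u.1 ∈ S ∧ (ofLex x).1 = u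
  · obtain ⟨u, hu, hxu⟩ := h
    exact mem_Blk_pos hx.2.1 ((hx.1 u hxu hu).trans_lt hq)
  · exact mem_Blk_not hx.2.1 h

lemma blk_good (S : Set Ordinal.{0}) (c : WithBot SmallOrd → WithBot SmallOrd)
    (hle : ∀ p, c p ≤ p) (b : WithBot SmallOrd) (hb : c b = b) (e : SmallOrd)
    (he : ∀ p, c p = b → p < e) :
    Countable (Blk S c b) ∧ DenselyOrdered (Blk S c b) ∧ NoMinOrder (Blk S c b) ∧
    NoMaxOrder (Blk S c b) ∧ Nonempty (Blk S c b) := by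
  refine ⟨?_, ⟨?_⟩, ⟨?_⟩, ⟨?_⟩, ⟨⟨toLex (b, 1), mem_Blk_pos hb one_pos⟩⟩⟩
  · exact ((countable_below e).mono fun x hx => he _ hx.2.1).to_subtype
  · rintro ⟨x, hx⟩ ⟨y, hy⟩ hxy
    have hxy' : x < y := hxy
    rw [Prod.Lex.lt_iff] at hxy'
    rcases hxy' with h | ⟨h, h'⟩
    · refine ⟨⟨toLex ((ofLex x).1, (ofLex x).2 + 1), mem_Blk_lt hx (by simp)⟩, ?_, ?_⟩
      · change x < _
        rw [Prod.Lex.lt_iff]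
        exact Or.inr ⟨rfl, by simp⟩
      · change _ < y
        rw [Prod.Lex.lt_iff]
        exact Or.inl h
    · refine ⟨⟨toLex ((ofLex x).1, ((ofLex x).2 + (ofLex y).2) / 2),
        mem_Blk_lt hx (by linarith)⟩, ?_, ?_⟩
      · change x < _
        rw [Prod.Lex.lt_iff]
        exact Or.inr ⟨rfl, by simp only [ofLex_toLex]; linarith⟩
      · change _ < y
        rw [Prod.Lex.lt_iff]
        exact Or.inr ⟨h, by simp only [ofLex_toLex]; linarith⟩
  · rintro ⟨x, hx⟩
    have hbx : b ≤ (ofLex x).1 := hx.2.1 ▸ hle _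
    rcases hbx.lt_or_eq with h | h
    · refine ⟨⟨toLex (b, 1), mem_Blk_pos hb one_pos⟩, ?_⟩
      change _ < x
      rw [Prod.Lex.lt_iff]
      exact Or.inl h
    · by_cases hs : ∃ u : SmallOrd, u.1 ∈ S ∧ (ofLex x).1 = u
      · obtain ⟨u, hu, hxu⟩ := hs
        have h0 : 0 ≤ (ofLex x).2 := hx.1 u hxu hu
        have h1 : 0 < (ofLex x).2 := by
          refine lt_of_le_of_ne h0 fun h2 => hx.2.2 ⟨h2.symm, ?_, u, hu, hxu⟩
          rw [← h, hb]
        refine ⟨⟨toLex (b, (ofLex x).2 / 2), mem_Blk_pos hb (by linarith)⟩, ?_⟩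
        change _ < x
        rw [Prod.Lex.lt_iff]
        exact Or.inr ⟨h, by simp only [ofLex_toLex]; linarith⟩
      · refine ⟨⟨toLex (b, (ofLex x).2 - 1), mem_Blk_not hb (h ▸ hs)⟩, ?_⟩
        change _ < x
        rw [Prod.Lex.lt_iff]
        exact Or.inr ⟨h, by simp⟩
  · rintro ⟨x, hx⟩
    refine ⟨⟨toLex ((ofLex x).1, (ofLex x).2 + 1), mem_Blk_lt hx (by simp)⟩, ?_⟩
    change x < _
    rw [Prod.Lex.lt_iff]
    exact Or.inr ⟨rfl, by simp⟩

def blockMap (S : Set Ordinal.{0}) (c : WithBot SmallOrd → WithBot SmallOrd) (x : LL) :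
    Lex (WithBot SmallOrd × Prop) := toLex (c (ofLex x).1, ¬ Sp S c x)

lemma blockMap_mono (S : Set Ordinal.{0}) (c : WithBot SmallOrd → WithBot SmallOrd)
    (hle : ∀ p, c p ≤ p) (hmono : Monotone c) : MonotoneOn (blockMap S c) (PhiSet S) := by
  intro x hx y hy hxy
  have hxy1 : (ofLex x).1 ≤ (ofLex y).1 := Prod.Lex.monotone_fst _ _ hxy
  rw [Prod.Lex.le_iff]
  rcases (hmono hxy1).lt_or_eq with h | h
  · exact Or.inl h
  · refine Or.inr ⟨h, ?_⟩
    change ¬ Sp S c x → ¬ Sp S c y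
    rintro hn ⟨hy0, hyc, a, ha, hya⟩
    apply hn
    have h1 : (ofLex x).1 = (ofLex y).1 := by
      apply le_antisymm hxy1
      rw [← hyc, ← h]
      exact hle _
    rw [Prod.Lex.le_iff] at hxy
    rcases hxy with h2 | ⟨-, h2⟩
    · exact absurd h1 h2.ne
    · rw [hy0] at h2
      refine ⟨le_antisymm h2 (hx a (h1.trans hya) ha), ?_, a, ha, h1.trans hya⟩
      rw [h1, hyc]

lemma backward {S S' : Set Ordinal.{0}} (h : ¬ IsStationaryIn (symmDiff S S')) :
    Nonempty (PhiSet S ≃o PhiSet S') := by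
  unfold IsStationaryIn at h
  push Not at h
  obtain ⟨C, hC, hemp⟩ := h
  have hag : ∀ a ∈ C, a ∈ S ↔ a ∈ S' := by
    intro a ha
    have : a ∉ symmDiff S S' := fun h => by
      have : a ∈ symmDiff S S' ∩ C := ⟨h, ha⟩
      rw [hemp] at this
      exact this
    rw [Set.mem_symmDiff] at this
    tauto
  choose c hle hcC hmax using floor_exists hC
  have hmax' : ∀ p e, (∀ a : SmallOrd, e = (a : WithBot SmallOrd) → a.1 ∈ C) → e ≤ p → e ≤ c p := by
    intro p e he hep
    cases e with
    | bot => exact bot_le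
    | coe v => exact hmax p v (he v rfl) hep
  have hmono : Monotone c := fun p q hpq => hmax' q _ (hcC p) ((hle p).trans hpq)
  have hidem : ∀ p, c (c p) = c p := fun p => le_antisymm (hle _) (hmax' _ _ (hcC p) le_rfl)
  refine glue _ _ (blockMap S c) (blockMap S' c) (blockMap_mono S c hle hmono)
    (blockMap_mono S' c hle hmono) ?_
  intro bt
  obtain ⟨b, t, rfl⟩ : ∃ b t, bt = toLex (b, t) := ⟨(ofLex bt).1, (ofLex bt).2, rfl⟩
  have hfib : ∀ (S : Set Ordinal.{0}) (x : LL), blockMap S c x = toLex (b, t) ↔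
      c (ofLex x).1 = b ∧ ((¬ Sp S c x) ↔ t) := by
    intro S x
    unfold blockMap
    rw [toLex_inj, Prod.mk.injEq, eq_iff_iff]
  have hE : ∀ S : Set Ordinal.{0}, {x : LL | x ∈ PhiSet S ∧ blockMap S c x = toLex (b, t)} =
      {x : LL | x ∈ PhiSet S ∧ c (ofLex x).1 = b ∧ ((¬ Sp S c x) ↔ t)} := by
    intro S
    ext x
    simp only [Set.mem_setOf_eq, hfib]
  rw [hE S, hE S']
  by_cases hb : c b = b
  · by_cases ht : t
    · have hset : ∀ S : Set Ordinal.{0}, {x : LL | x ∈ PhiSet S ∧ c (ofLex x).1 = b ∧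
          ((¬ Sp S c x) ↔ t)} = Blk S c b := by
        intro S
        ext x
        simp [Blk, ht]
      rw [hset S, hset S']
      have hex : ∃ e : SmallOrd, ∀ p, c p = b → p < e := by
        have hex' : ∃ e : SmallOrd, e.1 ∈ C ∧ b < e := by
          cases b with
          | bot =>
            obtain ⟨g, hg, -⟩ := hC.2.2 0 zero_lt_omega1
            exact ⟨⟨g, hC.1 hg⟩, hg, WithBot.bot_lt_coe _⟩
          | coe v =>
            obtain ⟨g, hg, hvg⟩ := hC.2.2 v.1 v.2
            exact ⟨⟨g, hC.1 hg⟩, hg, WithBot.coe_lt_coe.2 hvg⟩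
        obtain ⟨e, heC, hbe⟩ := hex'
        refine ⟨e, fun p hp => ?_⟩
        by_contra hn
        have := hmax p e heC (not_lt.1 hn)
        rw [hp] at this
        exact absurd hbe (not_lt.2 this)
      obtain ⟨e, he⟩ := hex
      obtain ⟨_, _, _, _, _⟩ := blk_good S c hle b hb e he
      obtain ⟨_, _, _, _, _⟩ := blk_good S' c hle b hb e he
      exact Order.iso_of_countable_dense _ _
    · have hsub : ∀ S S' : Set Ordinal.{0}, (∀ a ∈ C, a ∈ S ↔ a ∈ S') → 
          {x : LL | x ∈ PhiSet S ∧ c (ofLex x).1 = b ∧ ((¬ Sp S c x) ↔ t)} ⊆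
          {x : LL | x ∈ PhiSet S' ∧ c (ofLex x).1 = b ∧ ((¬ Sp S' c x) ↔ t)} := by
        rintro S S' hag x ⟨hx, hxb, hxt⟩
        have hsp : Sp S c x := by tauto
        obtain ⟨h0, hc, a, ha, hxa⟩ := hsp
        have haC : a.1 ∈ C := hcC _ a (hc.trans hxa)
        have hsp' : Sp S' c x := ⟨h0, hc, a, (hag _ haC).1 ha, hxa⟩
        exact ⟨fun _ _ _ => h0.ge, hxb, by tauto⟩
      exact ⟨OrderIso.setCongr _ _ (Set.Subset.antisymm (hsub S S' hag)
        (hsub S' S fun a ha => (hag a ha).symm))⟩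
  · have hset : ∀ S : Set Ordinal.{0}, {x : LL | x ∈ PhiSet S ∧ c (ofLex x).1 = b ∧
          ((¬ Sp S c x) ↔ t)} = ∅ := by
      intro S
      ext x
      simp only [Set.mem_setOf_eq, Set.mem_empty_iff_false, iff_false]
      rintro ⟨-, h, -⟩
      apply hb
      rw [← h, hidem]
    exact ⟨OrderIso.setCongr _ _ ((hset S).trans (hset S').symm)⟩

end PhiAux

/-- For bistationary `S, S' ⊆ ω₁`, the linear orders `Φ(S)` and `Φ(S')` are
order-isomorphic iff the symmetric difference `S ∆ S'` is nonstationary. -/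
theorem phi_iso_iff_symmDiff_nonstationary (S S' : Set Ordinal.{0})
    (hS : S ⊆ Set.Iio omega1) (hS' : S' ⊆ Set.Iio omega1)
    (hSbi : IsStationaryIn S ∧ IsStationaryIn (Set.Iio omega1 \ S))
    (hS'bi : IsStationaryIn S' ∧ IsStationaryIn (Set.Iio omega1 \ S')) :
    Nonempty (↥(PhiSet S) ≃o ↥(PhiSet S')) ↔ ¬ IsStationaryIn (symmDiff S S') := by
  exact ⟨fun ⟨f⟩ => PhiAux.forward f, PhiAux.backward⟩
end

section
/- Let X, Y, Z be pairwise disjoint sets of ordinals such that (X ∪ Y, Z) is an interlace. Define z ∼ z' for z, z' ∈ Z iff the open ordinal interval between min(z,z') and max(z,z') contains no element of X ∪ Y. Then ∼ is an equivalence relation on Z with infinitely many equivalence classes; moreover, listing the first ω equivalence classes [z_0], [z_1], [z_2], … in increasing order, for every n < ω the set {α ∈ X ∪ Y : every element of [z_n] is below α and α is below every element of [z_{n+1}]} is nonempty. Consequently the triple (X, Y, Z) codes a unique subset a ⊆ ω via the rule: n ∈ a iff the least α ∈ X ∪ Y lying strictly between the classes [z_n] and [z_{n+1}] belongs to X. 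-/
/-- A pair `(A, B)` of nonempty disjoint sets of ordinals is an interlace if
above every element of `A` there is an element of `B` and vice versa. -/
def Interlace (A B : Set Ordinal.{0}) : Prop :=
  A.Nonempty ∧ B.Nonempty ∧ Disjoint A B ∧
  (∀ a ∈ A, ∃ b ∈ B, a < b) ∧ (∀ b ∈ B, ∃ a ∈ A, b < a)

/-- `z ∼ z'` (relative to `X, Y`): the open ordinal interval between
`min z z'` and `max z z'` contains no element of `X ∪ Y`. -/
def Sim (X Y : Set Ordinal.{0}) (z z' : Ordinal.{0}) : Prop :=
  ∀ α ∈ X ∪ Y, ¬ (min z z' < α ∧ α < max z z')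

/-- Let `X, Y, Z` be pairwise disjoint sets of ordinals with `(X ∪ Y, Z)` an
interlace.  Then `∼` is an equivalence relation on `Z` with infinitely many
equivalence classes; listing the first `ω` classes `e 0 < e 1 < ⋯` in
increasing order, between any two consecutive classes `e n` and `e (n+1)`
there is an element of `X ∪ Y`; and consequently `(X, Y, Z)` codes a unique
set `a ⊆ ω` by: `n ∈ a` iff the least element of `X ∪ Y` strictly between
`e n` and `e (n+1)` belongs to `X`. -/
theorem interlace_coding (X Y Z : Set Ordinal.{0})
    (hXY : Disjoint X Y) (hXZ : Disjoint X Z) (hYZ : Disjoint Y Z)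
    (hI : Interlace (X ∪ Y) Z) :
    -- `∼` is an equivalence relation on `Z`
    ((∀ z ∈ Z, Sim X Y z z) ∧
     (∀ z ∈ Z, ∀ z' ∈ Z, Sim X Y z z' → Sim X Y z' z) ∧
     (∀ z ∈ Z, ∀ z' ∈ Z, ∀ z'' ∈ Z, Sim X Y z z' → Sim X Y z' z'' → Sim X Y z z'')) ∧
    -- with infinitely many equivalence classes
    {C : Set Ordinal.{0} | ∃ z ∈ Z, C = {w ∈ Z | Sim X Y z w}}.Infinite ∧
    -- the first `ω` equivalence classes, listed in increasing order
    ∃ e : ℕ → Set Ordinal.{0},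
      (∀ n, ∃ z ∈ Z, e n = {w ∈ Z | Sim X Y z w}) ∧
      (∀ n, ∀ z ∈ e n, ∀ w ∈ e (n + 1), z < w) ∧
      (∀ z ∈ Z, (∀ n, {w ∈ Z | Sim X Y z w} ≠ e n) → ∀ n, ∀ w ∈ e n, w < z) ∧
      -- between consecutive classes there is an element of `X ∪ Y`
      (∀ n, {α | α ∈ X ∪ Y ∧ (∀ z ∈ e n, z < α) ∧ ∀ w ∈ e (n + 1), α < w}.Nonempty) ∧
      -- hence `(X, Y, Z)` codes a unique subset of `ω`
      ∃! a : Set ℕ, ∀ n, (n ∈ a ↔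
        sInf {α | α ∈ X ∪ Y ∧ (∀ z ∈ e n, z < α) ∧ ∀ w ∈ e (n + 1), α < w} ∈ X) := by
  obtain ⟨hA, hZ, hD, hAB, hBA⟩ := hI
  have hne : ∀ α ∈ X ∪ Y, ∀ w ∈ Z, α ≠ w := fun α hα w hw h =>
    Set.disjoint_left.1 hD hα (h ▸ hw)
  have refl : ∀ z ∈ Z, Sim X Y z z := by
    intro z _ α _ h
    simp only [min_self, max_self] at h
    exact lt_asymm h.1 h.2
  have symm : ∀ z z', Sim X Y z z' → Sim X Y z' z := by
    intro z z' h α hα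
    rw [min_comm, max_comm]
    exact h α hα
  have trans : ∀ z ∈ Z, ∀ z' ∈ Z, ∀ z'' ∈ Z, Sim X Y z z' → Sim X Y z' z'' → Sim X Y z z'' := by
    intro z hz z' hz' z'' hz'' h1 h2 α hα h
    have a1 := h1 α hα
    have a2 := h2 α hα
    have := hne α hα z' hz'
    simp only [min_lt_iff, lt_max_iff] at a1 a2 h
    grind
  have cls : ∀ z ∈ Z, ∀ z' ∈ Z, Sim X Y z z' →
      {w ∈ Z | Sim X Y z' w} = {w ∈ Z | Sim X Y z w} := by
    intro z hz z' hz' h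
    ext w
    exact ⟨fun hw => ⟨hw.1, trans z hz z' hz' w hw.1 h hw.2⟩,
      fun hw => ⟨hw.1, trans z' hz' z hz w hw.1 (symm _ _ h) hw.2⟩⟩
  let S : Ordinal.{0} → Set Ordinal.{0} := fun z => {w | w ∈ Z ∧ ∃ α ∈ X ∪ Y, z < α ∧ α < w}
  have hS : ∀ z ∈ Z, (S z).Nonempty := by
    intro z hz
    obtain ⟨α, hα, h1⟩ := hBA z hz
    obtain ⟨w, hw, h2⟩ := hAB α hα
    exact ⟨w, hw, α, hα, h1, h2⟩
  let s : ℕ → Ordinal.{0} := fun n => Nat.rec (sInf Z) (fun _ z => sInf (S z)) n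
  have s0 : s 0 = sInf Z := rfl
  have ss : ∀ n, s (n+1) = sInf (S (s n)) := fun n => rfl
  have sZ : ∀ n, s n ∈ Z := by
    intro n
    induction n with
    | zero => exact csInf_mem hZ
    | succ n ih => exact (csInf_mem (hS _ ih)).1
  have gap : ∀ n, ∃ α ∈ X ∪ Y, s n < α ∧ α < s (n+1) := fun n => (csInf_mem (hS _ (sZ n))).2
  choose c hc hc1 hc2 using gap
  have mono : StrictMono s := strictMono_nat_of_lt_succ fun n => (hc1 n).trans (hc2 n)
  have key : ∀ n, ∀ w ∈ Z, s n ≤ w → w < s (n+1) → Sim X Y (s n) w := by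
    intro n w hw h1 h2 α hα h
    rw [min_eq_left h1, max_eq_right h1] at h
    exact notMem_of_lt_csInf' h2 ⟨hw, α, hα, h⟩
  let e : ℕ → Set Ordinal.{0} := fun n => {w ∈ Z | Sim X Y (s n) w}
  have up : ∀ n, ∀ w ∈ e n, w < c n := by
    intro n w hw
    by_contra hcon
    have h1 : c n < w := lt_of_le_of_ne (not_lt.1 hcon) (hne _ (hc n) w hw.1)
    exact hw.2 (c n) (hc n) ⟨min_lt_of_left_lt (hc1 n), lt_max_of_lt_right h1⟩
  have dn : ∀ n, ∀ w ∈ e (n+1), c n < w := by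
    intro n w hw
    by_contra hcon
    have h1 : w < c n := lt_of_le_of_ne (not_lt.1 hcon) (hne _ (hc n) w hw.1).symm
    exact hw.2 (c n) (hc n) ⟨min_lt_of_right_lt h1, lt_max_of_lt_left (hc2 n)⟩
  have self : ∀ n, s n ∈ e n := fun n => ⟨sZ n, refl _ (sZ n)⟩
  have ne_of_lt : ∀ m n, m < n → e m ≠ e n := by
    intro m n hmn h
    have h1 : s n ∈ e m := h ▸ self n
    exact absurd ((up m _ h1).trans (hc2 m)) (not_lt.2 (mono.monotone hmn))
  have inj : Function.Injective e := by
    intro m n h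
    rcases lt_trichotomy m n with h1 | h1 | h1
    · exact absurd h (ne_of_lt _ _ h1)
    · exact h1
    · exact absurd h.symm (ne_of_lt _ _ h1)
  refine ⟨⟨refl, fun z _ z' _ => symm z z', trans⟩,
    Set.infinite_of_injective_forall_mem inj (fun n => ⟨s n, sZ n, rfl⟩),
    e, fun n => ⟨s n, sZ n, rfl⟩, fun n z hz w hw => (up n z hz).trans (dn n w hw), ?_,
    fun n => ⟨c n, hc n, up n, dn n⟩, ?_⟩
  · intro z hz hzn
    have ge : ∀ n, s n ≤ z := by
      intro n
      induction n with
      | zero => exact csInf_le' hz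
      | succ n ih =>
        by_contra hcon
        exact hzn n (cls _ (sZ n) z hz (key n z hz ih (not_le.1 hcon)))
    intro n w hw
    exact (up n w hw).trans ((hc2 n).trans_le (ge (n+1)))
  · refine ⟨{n | sInf {α | α ∈ X ∪ Y ∧ (∀ z ∈ e n, z < α) ∧ ∀ w ∈ e (n + 1), α < w} ∈ X},
      fun n => Iff.rfl, ?_⟩
    intro b hb
    ext n
    exact hb n
end
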